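/- Let n ≥ 0 be an integer, m > 0, K > 0, 0 ≤ Δ ≤ 1 and γ̄ > 0. Then the n-th moment of the FTR distribution is ∫₀^∞ xⁿ f_FTR(x; γ̄, m, K, Δ) dx = n! · (γ̄/(1+K))ⁿ · Σ_{l=0}^n C(n,l) · ( K^l (m)_l / (l! m^l) ) · Σ_{q=0}^l C(l,q) · (2Δ)^q (1−Δ)^{l−q} · Γ(1/2+q) / (√π · Γ(1+q)). In particular, taking n = 0 shows that f_FTR integrates to 1 and taking n = 1 shows the mean equals γ̄. -/

import Mathlib

/-!
Fix the phase `θ` and put `u = K (1 + Δ cos θ) ≥ 0`, `t = u / (m + u) ∈ [0, 1)`,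
`c = (1 + K) / γ̄`. Integrating the series of `₁F₁` term by term against `xⁿ e^{-cx}` gives
`n! c⁻ⁿ (1 - t)^m ∑ₖ (m)ₖ / k! · C(n + k, n) tᵏ`. By Vandermonde,
`C(n + k, n) = ∑ₗ C(n, l) C(k, l)`, and the negative binomial series sums each inner series to
`(m)ₗ / l! · tˡ (1 - t)^(-m-l)`. Since `t / (1 - t) = u / m`, the moment at phase `θ` is the
polynomial `n! c⁻ⁿ ∑ₗ C(n, l) (m)ₗ / (l! mˡ) uˡ` (`conditional_moment`).

It remains to average over `θ`. Everything is nonnegative and the moment at phase `θ` is continuous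
in `θ`, so Fubini applies, and `integral_cos_avg` evaluates the mean of `(1 + Δ cos θ)ˡ` by
writing `1 + Δ cos θ = 2 Δ cos² (θ / 2) + (1 - Δ)` and using Wallis' integral.
-/

open MeasureTheory Real

/-- Pochhammer symbol (ascending factorial) `(a)_k`. -/
noncomputable def poch (a : ℝ) (k : ℕ) : ℝ := ∏ i ∈ Finset.range k, (a + i)

/-- Confluent hypergeometric function `₁F₁(a; 1; z)`. -/
noncomputable def hyp1F1 (a z : ℝ) : ℝ := ∑' k : ℕ, poch a k * z ^ k / ((Nat.factorial k : ℝ)) ^ 2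

/-- The FTR density `f_FTR(x; γ̄, m, K, Δ)`. -/
noncomputable def fFTR (g m K Δ x : ℝ) : ℝ :=
  (1 / π) * ∫ θ in (0 : ℝ)..π,
    (m / (m + K * (1 + Δ * Real.cos θ))) ^ m * ((1 + K) / g) * Real.exp (-(1 + K) * x / g) *
      hyp1F1 m (K * (1 + K) * (1 + Δ * Real.cos θ) * x / (g * (m + K * (1 + Δ * Real.cos θ))))

lemma poch_pos {a : ℝ} (ha : 0 < a) (k : ℕ) : 0 < poch a k :=
  Finset.prod_pos fun i _ => by positivity

lemma poch_add (a : ℝ) (l j : ℕ) : poch a (l + j) = poch a l * poch (a + l) j := by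
  simp only [poch, Finset.prod_range_add, Nat.cast_add, add_assoc]

lemma poch_eq_choose (a : ℝ) (k : ℕ) :
    Ring.choose (a + k - 1) k = poch a k / (Nat.factorial k : ℝ) := by
  have h := Ring.factorial_nsmul_multichoose_eq_ascPochhammer a k
  rw [Ring.choose, show a + k - 1 - k + 1 = a by ring,
    eq_div_iff (by positivity), mul_comm, ← nsmul_eq_mul, h,
    Polynomial.ascPochhammer_smeval_eq_eval]
  unfold poch
  clear h
  induction k with
  | zero => simp
  | succ k ih => rw [ascPochhammer_succ_eval, ih, Finset.prod_range_succ]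

/-- The negative binomial series `∑ (a)_k t^k / k! = (1 - t)^(-a)`. -/
lemma hasSum_negbin (a : ℝ) {t : ℝ} (ht0 : 0 ≤ t) (ht1 : t < 1) :
    HasSum (fun k : ℕ => poch a k / (Nat.factorial k : ℝ) * t ^ k) ((1 - t) ^ (-a)) := by
  have h := (Real.one_div_one_sub_rpow_hasFPowerSeriesOnBall_zero a).hasSum
    (y := t) (by simpa [enorm_eq_nnnorm, ← NNReal.coe_lt_coe, abs_of_nonneg ht0] using ht1)
  rw [zero_add, one_div, ← Real.rpow_neg (by linarith)] at h
  convert! h using 2 with k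
  simp [poch_eq_choose, mul_comm]

/-- The series of `hasSum_negbin` weighted by `C(k, l)`: the first `l` terms vanish, and shifting
the index by `l` turns the rest into the negative binomial series with parameter `m + l`. -/
lemma hasSum_negbin_choose (m : ℝ) (l : ℕ) {t : ℝ} (ht0 : 0 ≤ t) (ht1 : t < 1) :
    HasSum (fun k : ℕ => poch m k / (Nat.factorial k : ℝ) * (k.choose l : ℝ) * t ^ k)
      (poch m l / (Nat.factorial l : ℝ) * t ^ l * (1 - t) ^ (-(m + l))) := by
  rw [← hasSum_nat_add_iff' l, Finset.sum_eq_zero, sub_zero]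
  · convert! (hasSum_negbin (m + l) ht0 ht1).mul_left
      (poch m l / (Nat.factorial l : ℝ) * t ^ l) using 2 with j
    rw [add_comm j l, poch_add, pow_add, Nat.cast_add_choose]
    field_simp
  · intro k hk
    rw [Nat.choose_eq_zero_of_lt (Finset.mem_range.1 hk)]
    simp

lemma choose_vandermonde (n k : ℕ) :
    (n + k).choose n = ∑ l ∈ Finset.range (n + 1), n.choose l * k.choose l := by
  rw [Nat.add_choose_eq, ← Finset.Nat.sum_antidiagonal_swap,
    Finset.Nat.sum_antidiagonal_eq_sum_range_succ_mk]
  refine Finset.sum_congr rfl fun l hl => ?_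
  simp [Nat.choose_symm (Nat.lt_succ_iff.1 (Finset.mem_range.1 hl))]

/-- The series of moments at a fixed phase, with `u = K (1 + Δ cos θ)`: expand `C(n + k, n)` by
Vandermonde, sum over `k` with `hasSum_negbin_choose`, and use that `t = u / (m + u)` has
`t / (1 - t) = u / m`. -/
lemma hasSum_moment (n : ℕ) {m u : ℝ} (hm : 0 < m) (hu : 0 ≤ u) :
    HasSum (fun k : ℕ => (m / (m + u)) ^ m *
        (poch m k / (Nat.factorial k : ℝ) * ((n + k).choose n : ℝ) * (u / (m + u)) ^ k))
      (∑ l ∈ Finset.range (n + 1), (n.choose l : ℝ) *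
        (poch m l / ((Nat.factorial l : ℝ) * m ^ l)) * u ^ l) := by
  have hmu : 0 < m + u := by linarith
  have ht : 1 - u / (m + u) = m / (m + u) := by field_simp; ring
  have ht0 : 0 ≤ u / (m + u) := by positivity
  have ht1 : u / (m + u) < 1 := by rw [div_lt_one hmu]; linarith
  have h := (hasSum_sum (s := Finset.range (n + 1)) fun l _ =>
    (hasSum_negbin_choose m l ht0 ht1).mul_left (n.choose l : ℝ)).mul_left ((m / (m + u)) ^ m)
  convert! h using 1
  · funext k
    rw [choose_vandermonde]
    push_cast
    simp only [Finset.mul_sum, Finset.sum_mul]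
    exact Finset.sum_congr rfl fun l _ => by ring
  · rw [Finset.mul_sum]
    refine Finset.sum_congr rfl fun l _ => ?_
    have hq : 0 < m / (m + u) := by positivity
    rw [ht, neg_add, Real.rpow_add hq, Real.rpow_neg hq.le, Real.rpow_neg hq.le,
      Real.rpow_natCast]
    have := (Real.rpow_pos_of_pos hq m).ne'
    generalize (m / (m + u)) ^ m = A at *
    rw [div_pow, div_pow]
    field_simp

/-- Wallis' integral written with Gamma functions: the `2q`-th moment of `cos (θ / 2)` for `θ`
uniform on `[0, π]`. -/
lemma integral_half_cos_pow (q : ℕ) :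
    (1 / π) * ∫ θ in (0 : ℝ)..π, Real.cos (θ / 2) ^ (2 * q) =
      Real.Gamma (1 / 2 + q) / (Real.sqrt π * Real.Gamma (1 + q)) := by
  rw [intervalIntegral.integral_comp_div (fun x => Real.cos x ^ (2 * q)) two_ne_zero, zero_div,
    EulerSine.integral_cos_pow_eq, integral_sin_pow_even]
  have h : ∏ i ∈ Finset.range q, (2 * (i : ℝ) + 1) / (2 * i + 2) =
      Real.Gamma (1 / 2 + q) / (Real.sqrt π * Real.Gamma (1 + q)) := by
    induction q with
    | zero => simp [Real.Gamma_one_half_eq, -one_div, Real.sqrt_ne_zero'.2 pi_pos]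
    | succ q ih =>
      rw [Finset.prod_range_succ, ih]
      push_cast
      rw [← add_assoc, ← add_assoc, Real.Gamma_add_one (by positivity),
        Real.Gamma_add_one (s := 1 + (q : ℝ)) (by positivity)]
      have : 0 < Real.Gamma (1 + q) := Real.Gamma_pos_of_pos (by positivity)
      field_simp
      ring
  rw [h, smul_eq_mul]
  field_simp

/-- The average over the phase, by the binomial theorem applied to
`1 + Δ cos θ = 2 Δ cos² (θ / 2) + (1 - Δ)`. -/
lemma integral_cos_avg (Δ : ℝ) (l : ℕ) :
    (1 / π) * ∫ θ in (0 : ℝ)..π, (1 + Δ * Real.cos θ) ^ l =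
      ∑ q ∈ Finset.range (l + 1), (l.choose q : ℝ) * (2 * Δ) ^ q * (1 - Δ) ^ (l - q) *
        (Real.Gamma (1 / 2 + q) / (Real.sqrt π * Real.Gamma (1 + q))) := by
  have h : ∀ θ : ℝ, (1 + Δ * Real.cos θ) ^ l = ∑ q ∈ Finset.range (l + 1),
      ((l.choose q : ℝ) * (2 * Δ) ^ q * (1 - Δ) ^ (l - q)) * Real.cos (θ / 2) ^ (2 * q) := by
    intro θ
    have h2 : 1 + Δ * Real.cos θ = 2 * Δ * Real.cos (θ / 2) ^ 2 + (1 - Δ) := by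
      rw [show Real.cos θ = 2 * Real.cos (θ / 2) ^ 2 - 1 by
        rw [← Real.cos_two_mul]; congr 1; ring]
      ring
    rw [h2, add_pow]
    exact Finset.sum_congr rfl fun q _ => by rw [mul_pow, ← pow_mul]; ring
  simp_rw [h]
  rw [intervalIntegral.integral_finsetSum
    (fun q _ => (Continuous.intervalIntegrable (by fun_prop) _ _)), Finset.mul_sum]
  refine Finset.sum_congr rfl fun q _ => ?_
  rw [intervalIntegral.integral_const_mul, mul_left_comm, integral_half_cos_pow]

lemma hyp1F1_nonneg {a z : ℝ} (ha : 0 < a) (hz : 0 ≤ z) : 0 ≤ hyp1F1 a z :=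
  tsum_nonneg fun k => by have := poch_pos ha k; positivity

lemma measurable_hyp1F1 (a : ℝ) : Measurable (hyp1F1 a) := by
  unfold hyp1F1
  fun_prop

lemma integral_pow_mul_exp (N : ℕ) {c : ℝ} (hc : 0 < c) :
    ∫ x in Set.Ioi (0 : ℝ), x ^ N * Real.exp (-(c * x)) = (Nat.factorial N : ℝ) / c ^ (N + 1) := by
  have h := Real.integral_rpow_mul_exp_neg_mul_Ioi (a := N + 1) (by positivity) hc
  simp only [add_sub_cancel_right, Real.rpow_natCast] at h
  rw [h, Real.Gamma_nat_eq_factorial, ← Nat.cast_succ, Real.rpow_natCast, one_div, inv_pow,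
    inv_mul_eq_div]

/-- Integrability follows from the integral being nonzero, as a non-integrable function has
integral `0`. -/
lemma integrable_pow_mul_exp (N : ℕ) {c : ℝ} (hc : 0 < c) :
    IntegrableOn (fun x : ℝ => x ^ N * Real.exp (-(c * x))) (Set.Ioi 0) :=
  Integrable.of_integral_ne_zero (by rw [integral_pow_mul_exp N hc]; positivity)

/-- The `n`-th moment of the integrand of `fFTR` at a fixed phase, where `c = (1 + K) / γ̄` and
`u = K (1 + Δ cos θ)`; the hypergeometric series is integrated term by term. -/
lemma conditional_moment (n : ℕ) {m c u : ℝ} (hm : 0 < m) (hc : 0 < c) (hu : 0 ≤ u) :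
    ∫ x in Set.Ioi (0 : ℝ), x ^ n * ((m / (m + u)) ^ m * c * Real.exp (-(c * x)) *
        hyp1F1 m (u / (m + u) * (c * x))) =
      (Nat.factorial n : ℝ) / c ^ n * ∑ l ∈ Finset.range (n + 1), (n.choose l : ℝ) *
        (poch m l / ((Nat.factorial l : ℝ) * m ^ l)) * u ^ l := by
  have hmu : 0 < m + u := by linarith
  set A := (m / (m + u)) ^ m with hA
  set t := u / (m + u) with ht
  have hA0 : 0 < A := Real.rpow_pos_of_pos (by positivity) _
  have ht0 : 0 ≤ t := by positivity
  -- `F k` is the `k`-th term of the integrand after expanding the hypergeometric series.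
  let C : ℕ → ℝ := fun k => A * c * poch m k / (Nat.factorial k : ℝ) ^ 2 * (t * c) ^ k
  have hC : ∀ k, 0 ≤ C k := fun k => by have := poch_pos hm k; positivity
  let F : ℕ → ℝ → ℝ := fun k x => C k * (x ^ (n + k) * Real.exp (-(c * x)))
  have hint : ∀ k, ∫ x in Set.Ioi (0 : ℝ), F k x = (Nat.factorial n : ℝ) / c ^ n *
      (A * (poch m k / (Nat.factorial k : ℝ) * ((n + k).choose n : ℝ) * t ^ k)) := by
    intro k
    simp only [F, C]
    rw [integral_const_mul, integral_pow_mul_exp _ hc, Nat.cast_add_choose]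
    field_simp
    ring
  have hsum : HasSum (fun k => ∫ x in Set.Ioi (0 : ℝ), F k x) ((Nat.factorial n : ℝ) / c ^ n *
      ∑ l ∈ Finset.range (n + 1), (n.choose l : ℝ) *
        (poch m l / ((Nat.factorial l : ℝ) * m ^ l)) * u ^ l) := by
    simp_rw [hint]
    exact (hasSum_moment n hm hu).mul_left _
  have hF := hasSum_integral_of_summable_integral_norm (F := F)
    (μ := volume.restrict (Set.Ioi (0 : ℝ)))
    (fun k => (integrable_pow_mul_exp (n + k) hc).const_mul (C k)) (by
      refine hsum.summable.congr fun k => setIntegral_congr_fun measurableSet_Ioi fun x hx => ?_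
      have hx0 : (0 : ℝ) < x := hx
      exact (Real.norm_of_nonneg (mul_nonneg (hC k) (by positivity))).symm)
  rw [← hF.unique hsum]
  congr 1
  funext x
  rw [hyp1F1, ← tsum_mul_left, ← tsum_mul_left]
  refine tsum_congr fun k => ?_
  simp only [F, C]
  rw [pow_add, mul_pow, mul_pow, mul_pow]
  ring

theorem stmt6 (n : ℕ) (m K Δ g : ℝ) (hm : 0 < m) (hK : 0 < K)
    (hΔ0 : 0 ≤ Δ) (hΔ1 : Δ ≤ 1) (hg : 0 < g) :
    ∫ x in Set.Ioi (0 : ℝ), x ^ n * fFTR g m K Δ x =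
      (Nat.factorial n : ℝ) * (g / (1 + K)) ^ n *
        ∑ l ∈ Finset.range (n + 1), (n.choose l : ℝ) *
          (K ^ l * poch m l / ((Nat.factorial l : ℝ) * m ^ l)) *
          ∑ q ∈ Finset.range (l + 1), (l.choose q : ℝ) * (2 * Δ) ^ q * (1 - Δ) ^ (l - q) *
            (Real.Gamma (1 / 2 + q) / (Real.sqrt π * Real.Gamma (1 + q))) := by
  set c := (1 + K) / g with hc
  have hc0 : 0 < c := by positivity
  let u : ℝ → ℝ := fun θ => K * (1 + Δ * Real.cos θ)
  have hu : ∀ θ, 0 ≤ u θ := fun θ =>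
    mul_nonneg hK.le (by nlinarith [Real.neg_one_le_cos θ])
  have huc : Continuous u := by fun_prop
  let G : ℝ → ℝ → ℝ := fun x θ => x ^ n * ((m / (m + u θ)) ^ m * c * Real.exp (-(c * x)) *
        hyp1F1 m (u θ / (m + u θ) * (c * x)))
  have hG : ∀ x, x ^ n * fFTR g m K Δ x = (1 / π) * ∫ θ in Set.Ioc 0 π, G x θ := by
    intro x
    rw [fFTR, mul_left_comm, ← intervalIntegral.integral_const_mul,
      intervalIntegral.integral_of_le pi_pos.le]
    congr 2
    funext θ
    have : 0 < m + u θ := by linarith [hu θ]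
    simp only [G]
    congr 3
    · congr 1; rw [hc]; ring
    · rw [hc]; simp only [u] at *; field_simp
  have hGm : Measurable (Function.uncurry G) := by
    have := measurable_hyp1F1 m
    have := huc.measurable
    simp only [G, Function.uncurry_def]
    fun_prop
  let M : ℝ → ℝ := fun θ => (Nat.factorial n : ℝ) / c ^ n * ∑ l ∈ Finset.range (n + 1),
    (n.choose l : ℝ) * (poch m l / ((Nat.factorial l : ℝ) * m ^ l)) * u θ ^ l
  have hM : ∀ θ, ∫ x in Set.Ioi 0, G x θ = M θ := fun θ => conditional_moment n hm hc0 (hu θ)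
  have hM0 : ∀ θ, 0 < M θ := by
    intro θ
    -- The terms of the sum are nonnegative and the one with `l = 0` equals `1`.
    refine mul_pos (by positivity) (Finset.sum_pos' (fun l _ => ?_) ⟨0, by simp, ?_⟩)
    · have := poch_pos hm l
      have := hu θ
      positivity
    · simp [poch]
  have hGi : Integrable (Function.uncurry G)
      ((volume.restrict (Set.Ioi (0 : ℝ))).prod (volume.restrict (Set.Ioc 0 π))) := by
    rw [integrable_prod_iff' hGm.aestronglyMeasurable]
    -- `G` is nonnegative, so its `x`-integral `M θ`, nonzero and continuous in `θ`, gives both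
    -- conditions.
    refine ⟨.of_forall fun θ => Integrable.of_integral_ne_zero ?_, ?_⟩
    · exact ((hM θ).trans_ne (hM0 θ).ne')
    · have : ∀ θ, ∫ x in Set.Ioi 0, ‖Function.uncurry G (x, θ)‖ = M θ := by
        intro θ
        rw [← hM]
        refine setIntegral_congr_fun measurableSet_Ioi fun x hx => Real.norm_of_nonneg ?_
        have hx0 : (0 : ℝ) < x := hx
        have := hu θ
        have : 0 ≤ hyp1F1 m (u θ / (m + u θ) * (c * x)) := hyp1F1_nonneg hm (by positivity)
        simp only [Function.uncurry, G]
        positivity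
      simp_rw [this]
      have hMc : Continuous M := by fun_prop
      exact hMc.integrableOn_Ioc
  simp_rw [hG]
  rw [integral_const_mul, integral_integral_swap hGi]
  simp_rw [hM, M]
  rw [← intervalIntegral.integral_of_le pi_pos.le, intervalIntegral.integral_const_mul,
    intervalIntegral.integral_finsetSum
    (fun q _ => (Continuous.intervalIntegrable (by fun_prop) _ _)), mul_left_comm, Finset.mul_sum]
  congr 1
  · rw [hc, ← inv_div g, inv_pow, div_inv_eq_mul]
  · refine Finset.sum_congr rfl fun l _ => ?_
    rw [← integral_cos_avg, intervalIntegral.integral_const_mul]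
    simp only [u, mul_pow]
    rw [intervalIntegral.integral_const_mul]
    ring
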